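/- arXiv:2407.17103 — 5 statements merged into one kernel-verified Lean document; each statement's English description precedes it below -/
import Mathlib

section
/- Let m, m', n, n' be positive integers, let Φ be any linear map from n×n to m×m complex matrices, and let Ψ_K(ρ) = ∑_a K_a ρ K_a† with K_a ∈ ℂ^{m'×m} and Ψ_L(ρ) = ∑_b L_b ρ L_b† with L_b ∈ ℂ^{n×n'} be completely positive maps given by these Kraus operators. Then C(Ψ_K ∘ Φ ∘ Ψ_L) = ∑_{a,b} (L_bᵀ ⊗ K_a) C(Φ) (L_bᵀ ⊗ K_a)†. -/
open Matrix Kronecker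
open scoped ComplexOrder

noncomputable section

/-- The linear map `ρ ↦ A ρ Bᴴ`. -/
def sandwich₂ {m n : ℕ} (A B : Matrix (Fin m) (Fin n) ℂ) :
    Matrix (Fin n) (Fin n) ℂ →ₗ[ℂ] Matrix (Fin m) (Fin m) ℂ where
  toFun ρ := A * ρ * Bᴴ
  map_add' X Y := by simp [Matrix.mul_add, Matrix.add_mul]
  map_smul' c X := by simp [Matrix.mul_smul, Matrix.smul_mul]

/-- The linear map `ρ ↦ A ρ Aᴴ`. -/
def sandwich {m n : ℕ} (A : Matrix (Fin m) (Fin n) ℂ) :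
    Matrix (Fin n) (Fin n) ℂ →ₗ[ℂ] Matrix (Fin m) (Fin m) ℂ :=
  sandwich₂ A A

/-- The Choi matrix `C(Φ) = ∑ⱼₖ Eⱼₖ ⊗ Φ(Eⱼₖ)`. -/
def Choi {n m : ℕ} (Φ : Matrix (Fin n) (Fin n) ℂ →ₗ[ℂ] Matrix (Fin m) (Fin m) ℂ) :
    Matrix (Fin n × Fin m) (Fin n × Fin m) ℂ :=
  ∑ j : Fin n, ∑ k : Fin n,
    (Matrix.single j k (1 : ℂ)) ⊗ₖ Φ (Matrix.single j k (1 : ℂ))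

/-- Vectorization: `vec X = ∑ⱼ eⱼ ⊗ X eⱼ`, i.e. `(vec X) (j, i) = X i j`. -/
def vec {m n : ℕ} (X : Matrix (Fin m) (Fin n) ℂ) : Fin n × Fin m → ℂ :=
  fun p => X p.2 p.1

/-- Complete positivity (via the Choi characterization). -/
def IsCP {n : ℕ} (Φ : Matrix (Fin n) (Fin n) ℂ →ₗ[ℂ] Matrix (Fin n) (Fin n) ℂ) : Prop :=
  (Choi Φ).PosSemidef

/-- Trace preservation. -/
def IsTP {n : ℕ} (Φ : Matrix (Fin n) (Fin n) ℂ →ₗ[ℂ] Matrix (Fin n) (Fin n) ℂ) : Prop :=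
  ∀ ρ, (Φ ρ).trace = ρ.trace

/-- Quantum channel: completely positive and trace preserving. -/
def IsChannel {n : ℕ} (Φ : Matrix (Fin n) (Fin n) ℂ →ₗ[ℂ] Matrix (Fin n) (Fin n) ℂ) : Prop :=
  IsCP Φ ∧ IsTP Φ

/-- `K_λ = 1 - (1 - √(1-λ)) x x†`. -/
def Kmat {n : ℕ} (lam : ℝ) (x : Fin n → ℂ) : Matrix (Fin n) (Fin n) ℂ :=
  1 - ((1 - Real.sqrt (1 - lam) : ℝ) : ℂ) • Matrix.vecMulVec x (star x)

/-- `L_λ = √λ y x†`. -/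
def Lmat {n : ℕ} (lam : ℝ) (x y : Fin n → ℂ) : Matrix (Fin n) (Fin n) ℂ :=
  ((Real.sqrt lam : ℝ) : ℂ) • Matrix.vecMulVec y (star x)

/-- The elementary channel `Ψ_{λ,x,y} = K_λ (·) K_λ† + L_λ (·) L_λ†`. -/
def Psi {n : ℕ} (lam : ℝ) (x y : Fin n → ℂ) :
    Matrix (Fin n) (Fin n) ℂ →ₗ[ℂ] Matrix (Fin n) (Fin n) ℂ :=
  sandwich (Kmat lam x) + sandwich (Lmat lam x y)

/-- For `λ ∈ [0,1)` and `⟨x,y⟩ = 0`, the inverse of `Ψ_{λ,x,y}`: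
`Ψ_{λ,x,y}⁻¹ = K_λ⁻¹ (·) K_λ⁻¹ - (1-λ)⁻¹ L_λ (·) L_λ†`. -/
def PsiInv {n : ℕ} (lam : ℝ) (x y : Fin n → ℂ) :
    Matrix (Fin n) (Fin n) ℂ →ₗ[ℂ] Matrix (Fin n) (Fin n) ℂ :=
  sandwich (Kmat lam x)⁻¹ - (((1 - lam)⁻¹ : ℝ) : ℂ) • sandwich (Lmat lam x y)

/-- `Φ` is conjugation by a unitary. -/
def IsUnitaryConj {n : ℕ} (Φ : Matrix (Fin n) (Fin n) ℂ →ₗ[ℂ] Matrix (Fin n) (Fin n) ℂ) : Prop :=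
  ∃ U ∈ Matrix.unitaryGroup (Fin n) ℂ, ∀ ρ, Φ ρ = U * ρ * Uᴴ

/-- A quantum channel is divisible if it factors into two channels neither of which is
a unitary conjugation. -/
def Divisible {n : ℕ} (Φ : Matrix (Fin n) (Fin n) ℂ →ₗ[ℂ] Matrix (Fin n) (Fin n) ℂ) : Prop :=
  ∃ Φ₁ Φ₂ : Matrix (Fin n) (Fin n) ℂ →ₗ[ℂ] Matrix (Fin n) (Fin n) ℂ,
    IsChannel Φ₁ ∧ IsChannel Φ₂ ∧ Φ = Φ₁ ∘ₗ Φ₂ ∧ ¬ IsUnitaryConj Φ₁ ∧ ¬ IsUnitaryConj Φ₂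

/-- `Z = conj(x) conj(x⊥)† ⊗ 1`. -/
def Zmat {n : ℕ} (x xp : Fin n → ℂ) : Matrix (Fin n × Fin n) (Fin n × Fin n) ℂ :=
  (Matrix.vecMulVec (star x) xp) ⊗ₖ (1 : Matrix (Fin n) (Fin n) ℂ)

/-!
The coefficient of `E_pq` in `A E_ij B` equals that of `E_ij` in `Aᵀ E_pq Bᵀ`: both are
`A p i * B j q`. So multiplications applied to the input of `Φ` move, transposed, onto the first
tensor factor of the Choi matrix, while those applied to its output act on the second factor, and
`(A ⊗ B) (C ⊗ D) = A C ⊗ B D` merges the two actions.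
-/

section MatrixUnits

variable {R k l m n : Type*} [Fintype k] [Fintype l] [Fintype m] [Fintype n]
  [DecidableEq k] [DecidableEq l] [DecidableEq m] [DecidableEq n]

theorem mul_single_one_mul_eq_sum [Semiring R] (A : Matrix k m R) (B : Matrix n l R)
    (i : m) (j : n) :
    A * single i j (1 : R) * B = ∑ p, ∑ q, (A p i * B j q) • single p q (1 : R) := by
  rw [matrix_eq_sum_single (A * single i j (1 : R) * B)]
  simp [Matrix.mul_apply, single_apply, ite_and]

theorem sum_single_mul_single_mul_eq_sum_transpose [CommSemiring R] {N : Type*}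
    [AddCommMonoid N] [Module R N]
    (β : Matrix m n R →ₗ[R] Matrix k l R →ₗ[R] N) (A : Matrix k m R) (B : Matrix n l R) :
    ∑ i, ∑ j, β (single i j 1) (A * single i j (1 : R) * B) =
      ∑ p, ∑ q, β (Aᵀ * single p q (1 : R) * Bᵀ) (single p q 1) := by
  calc
    _ = ∑ i, ∑ j, ∑ p, ∑ q, (A p i * B j q) • β (single i j 1) (single p q 1) := by
      simp only [mul_single_one_mul_eq_sum A B, map_sum, map_smul]
    _ = ∑ p, ∑ q, ∑ i, ∑ j, (A p i * B j q) • β (single i j 1) (single p q 1) := by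
      rw [Finset.sum_comm_cycle]
      exact Finset.sum_congr rfl fun p _ => Finset.sum_comm_cycle
    _ = _ := by
      simp only [mul_single_one_mul_eq_sum Aᵀ Bᵀ, transpose_apply, map_sum, map_smul,
        LinearMap.sum_apply, LinearMap.smul_apply]

end MatrixUnits

section Choi

variable {m m' n n' : ℕ}

theorem choi_sum {ι : Type*} (s : Finset ι)
    (Φ : ι → Matrix (Fin n) (Fin n) ℂ →ₗ[ℂ] Matrix (Fin m) (Fin m) ℂ) :
    Choi (∑ a ∈ s, Φ a) = ∑ a ∈ s, Choi (Φ a) := by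
  ext p q
  simp [Choi, Matrix.sum_apply, single_apply, ite_and]

theorem choi_sandwich₂_comp_comp_sandwich₂
    (Φ : Matrix (Fin n) (Fin n) ℂ →ₗ[ℂ] Matrix (Fin m) (Fin m) ℂ)
    (K K' : Matrix (Fin m') (Fin m) ℂ) (L L' : Matrix (Fin n) (Fin n') ℂ) :
    Choi (sandwich₂ K K' ∘ₗ Φ ∘ₗ sandwich₂ L L') = (Lᵀ ⊗ₖ K) * Choi Φ * (L'ᵀ ⊗ₖ K')ᴴ := by
  calc
    _ = ∑ i, ∑ j, single i j (1 : ℂ) ⊗ₖ (K * Φ (L * single i j (1 : ℂ) * L'ᴴ) * K'ᴴ) := rfl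
    _ = ∑ p, ∑ q, (Lᵀ * single p q (1 : ℂ) * L'ᴴᵀ) ⊗ₖ (K * Φ (single p q 1) * K'ᴴ) :=
      sum_single_mul_single_mul_eq_sum_transpose
        (kroneckerBilinear.compl₂ (sandwich₂ K K' ∘ₗ Φ)) L L'ᴴ
    _ = ∑ p, ∑ q, (Lᵀ ⊗ₖ K) * (single p q (1 : ℂ) ⊗ₖ Φ (single p q 1)) * (L'ᵀ ⊗ₖ K')ᴴ := by
      simp only [mul_kronecker_mul, conjTranspose_kronecker,
        conjTranspose_transpose_eq_transpose_conjTranspose]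
    _ = _ := by
      simp only [Choi, Matrix.mul_sum, Matrix.sum_mul]

theorem choi_of_comp_general {ι κ : Type*} (s : Finset ι) (t : Finset κ)
    (Φ : Matrix (Fin n) (Fin n) ℂ →ₗ[ℂ] Matrix (Fin m) (Fin m) ℂ)
    (K K' : ι → Matrix (Fin m') (Fin m) ℂ) (L L' : κ → Matrix (Fin n) (Fin n') ℂ) :
    Choi ((∑ a ∈ s, sandwich₂ (K a) (K' a)) ∘ₗ Φ ∘ₗ ∑ b ∈ t, sandwich₂ (L b) (L' b)) =
      ∑ a ∈ s, ∑ b ∈ t, ((L b)ᵀ ⊗ₖ K a) * Choi Φ * ((L' b)ᵀ ⊗ₖ K' a)ᴴ := by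
  have comp_eq_sum : (∑ a ∈ s, sandwich₂ (K a) (K' a)) ∘ₗ Φ ∘ₗ ∑ b ∈ t, sandwich₂ (L b) (L' b) =
      ∑ a ∈ s, ∑ b ∈ t, sandwich₂ (K a) (K' a) ∘ₗ Φ ∘ₗ sandwich₂ (L b) (L' b) := by
    ext1 ρ
    simp only [LinearMap.comp_apply, LinearMap.sum_apply, map_sum]
    exact Finset.sum_comm
  simp only [comp_eq_sum, choi_sum, choi_sandwich₂_comp_comp_sandwich₂]

end Choi

/-- `C(Ψ_K ∘ Φ ∘ Ψ_L) = ∑_{a,b} (L_bᵀ ⊗ K_a) C(Φ) (L_bᵀ ⊗ K_a)†`. -/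
theorem choi_of_comp (m m' n n' : ℕ) (hm : 0 < m) (hm' : 0 < m') (hn : 0 < n) (hn' : 0 < n')
    (Φ : Matrix (Fin n) (Fin n) ℂ →ₗ[ℂ] Matrix (Fin m) (Fin m) ℂ)
    (r s : ℕ) (K : Fin r → Matrix (Fin m') (Fin m) ℂ) (L : Fin s → Matrix (Fin n) (Fin n') ℂ) :
    Choi ((∑ a, sandwich (K a)) ∘ₗ Φ ∘ₗ (∑ b, sandwich (L b))) =
      ∑ a, ∑ b, ((L b)ᵀ ⊗ₖ K a) * Choi Φ * ((L b)ᵀ ⊗ₖ K a)ᴴ :=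
  choi_of_comp_general Finset.univ Finset.univ Φ K K L L

end
end

section
/- Let x, y ∈ ℂⁿ be linearly independent unit vectors, let x⊥ be any unit vector in span{x,y} orthogonal to x, and let λ ∈ [0,1). Then Ψ_{λ,x,y} is bijective, and its inverse is the map ρ ↦ K_λ^{-1} ρ K_λ^{-1} − L̂_λ ρ L̂_λ†, where L̂_λ := (√λ ⟨x,y⟩ / √((1−λ)(1−λ|⟨x⊥,y⟩|²))) x x† + (√λ ⟨x⊥,y⟩ / √(1−λ|⟨x⊥,y⟩|²)) x⊥ x†. -/
open Matrix Kronecker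
open scoped ComplexOrder

noncomputable section

/-- The operator `L̂_λ` appearing in the inverse of `Ψ_{λ,x,y}`. -/
def Lhat {n : ℕ} (lam : ℝ) (x y xp : Fin n → ℂ) : Matrix (Fin n) (Fin n) ℂ :=
  (((Real.sqrt lam : ℂ) * (star x ⬝ᵥ y)) /
      ((Real.sqrt ((1 - lam) * (1 - lam * ‖star xp ⬝ᵥ y‖ ^ 2)) : ℝ) : ℂ)) •
    Matrix.vecMulVec x (star x) +
  (((Real.sqrt lam : ℂ) * (star xp ⬝ᵥ y)) /
      ((Real.sqrt (1 - lam * ‖star xp ⬝ᵥ y‖ ^ 2) : ℝ) : ℂ)) •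
    Matrix.vecMulVec xp (star x)

/-!
Both Kraus operators of `Ψ = K (·) K† + L (·) L†` have `x†` as a left eigenvector:
`x† K = √(1-λ) x†` and `x† L = √λ ⟨x, y⟩ x†`. Hence `Ψ` multiplies the functional
`ρ ↦ ⟨x, ρ x⟩` by the constant `d = 1 - λ + λ |⟨x, y⟩|² = 1 - λ |⟨x⊥, y⟩|² > 0`. As `L` has rank
one, `L ρ L†` depends on `ρ` through `⟨x, ρ x⟩` only, so it can be read off from `Ψ ρ`, and
`K⁻¹ (Ψ ρ) K⁻¹ = ρ + K⁻¹ (L ρ L†) K⁻¹ = ρ + d⁻¹ (K⁻¹ L) (Ψ ρ) (K⁻¹ L)†`.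
Finally `d^{-1/2} K⁻¹ L` is `L̂`, because `K⁻¹` acts on `y` by dividing its component along `x`
by `√(1-λ)` and fixing its component along `x⊥`.
-/

section CommSemiring

variable {m R : Type*} [Fintype m] [CommSemiring R] [StarRing R]

lemma vecMulVec_star_mul_mul_conjTranspose (u x : m → R) (ρ : Matrix m m R) :
    vecMulVec u (star x) * ρ * (vecMulVec u (star x))ᴴ =
      (star x ⬝ᵥ ρ *ᵥ x) • vecMulVec u (star u) := by
  rw [conjTranspose_vecMulVec, star_star, vecMulVec_mul, vecMulVec_mul_vecMulVec,
    ← dotProduct_mulVec, vecMulVec_smul]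

lemma star_dotProduct_conj_mulVec_of_star_vecMul_eq_smul {x : m → R} {A : Matrix m m R} {κ : R}
    (hA : star x ᵥ* A = κ • star x) (ρ : Matrix m m R) :
    star x ⬝ᵥ (A * ρ * Aᴴ) *ᵥ x = κ * star κ * (star x ⬝ᵥ ρ *ᵥ x) := by
  have hAx : Aᴴ *ᵥ x = star κ • x := by
    simpa [star_vecMul, star_smul] using congrArg star hA
  rw [← mulVec_mulVec, hAx, ← mulVec_mulVec, dotProduct_mulVec, hA, mulVec_smul,
    dotProduct_smul, smul_dotProduct, smul_eq_mul, smul_eq_mul]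
  ring

lemma star_dotProduct_self_eq_of_eq_smul_add_smul {x y z : m → R}
    (hy : y = (star x ⬝ᵥ y) • x + (star z ⬝ᵥ y) • z) :
    star y ⬝ᵥ y =
      (star x ⬝ᵥ y) * star (star x ⬝ᵥ y) + (star z ⬝ᵥ y) * star (star z ⬝ᵥ y) := by
  nth_rw 2 [hy]
  rw [dotProduct_add, dotProduct_smul, dotProduct_smul, star_dotProduct y x, star_dotProduct y z,
    smul_eq_mul, smul_eq_mul]

end CommSemiring

section CommRing

variable {m R : Type*} [Fintype m] [CommRing R] [StarRing R]

lemma leftInverse_conj_add_conj_vecMulVec [DecidableEq m] {K : Matrix m m R} {x w : m → R}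
    {κ c : R} (hK : IsUnit K.det) (hx : star x ᵥ* K = κ • star x)
    (hc : c * star c * (κ * star κ + (star x ⬝ᵥ w) * star (star x ⬝ᵥ w)) = 1) :
    Function.LeftInverse
      (fun σ => K⁻¹ * σ * K⁻¹ᴴ -
        (c • vecMulVec (K⁻¹ *ᵥ w) (star x)) * σ * (c • vecMulVec (K⁻¹ *ᵥ w) (star x))ᴴ)
      (fun ρ => K * ρ * Kᴴ + vecMulVec w (star x) * ρ * (vecMulVec w (star x))ᴴ) := by
  intro ρ
  beta_reduce
  set σ := K * ρ * Kᴴ + vecMulVec w (star x) * ρ * (vecMulVec w (star x))ᴴ with hσ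
  have hσx : star x ⬝ᵥ σ *ᵥ x =
      (κ * star κ + (star x ⬝ᵥ w) * star (star x ⬝ᵥ w)) * (star x ⬝ᵥ ρ *ᵥ x) := by
    rw [hσ, add_mulVec, dotProduct_add, star_dotProduct_conj_mulVec_of_star_vecMul_eq_smul hx,
      star_dotProduct_conj_mulVec_of_star_vecMul_eq_smul (vecMul_vecMulVec _ _ _), add_mul]
  have hKσ : K⁻¹ * σ * K⁻¹ᴴ =
      ρ + (star x ⬝ᵥ ρ *ᵥ x) • vecMulVec (K⁻¹ *ᵥ w) (star (K⁻¹ *ᵥ w)) := by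
    have hKdet : IsUnit Kᴴ.det := by simpa only [det_conjTranspose] using hK.star
    rw [hσ, vecMulVec_star_mul_mul_conjTranspose, mul_add, add_mul, Matrix.mul_assoc K,
      nonsing_inv_mul_cancel_left _ _ hK, conjTranspose_nonsing_inv,
      mul_nonsing_inv_cancel_right _ _ hKdet, mul_smul_comm, smul_mul_assoc, mul_vecMulVec,
      vecMulVec_mul, star_mulVec, conjTranspose_nonsing_inv]
  rw [hKσ, conjTranspose_smul, smul_mul_assoc, smul_mul_smul_comm,
    vecMulVec_star_mul_mul_conjTranspose, smul_smul, hσx, ← mul_assoc, hc, one_mul,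
    add_sub_cancel_right]

lemma eq_smul_add_smul_of_mem_span_pair {x y z : m → R}
    (hx : star x ⬝ᵥ x = 1) (hz : star z ⬝ᵥ z = 1) (hxz : star x ⬝ᵥ z = 0)
    (hmem : z ∈ Submodule.span R {x, y}) :
    y = (star x ⬝ᵥ y) • x + (star z ⬝ᵥ y) • z := by
  obtain ⟨p, q, hpq⟩ := Submodule.mem_span_pair.1 hmem
  have hzx : star z ⬝ᵥ x = 0 := by rw [star_dotProduct, hxz, star_zero]
  have dotProduct_z (v : m → R) : v ⬝ᵥ z = p * (v ⬝ᵥ x) + q * (v ⬝ᵥ y) := by simp [← hpq]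
  have hp : p = -(q * (star x ⬝ᵥ y)) := by
    linear_combination hxz - dotProduct_z (star x) - p * hx
  have hq : (star z ⬝ᵥ y) * q = 1 := by
    linear_combination hz - dotProduct_z (star z) - p * hzx
  calc
    y = ((star z ⬝ᵥ y) * q) • y := by rw [hq, one_smul]
    _ = (star z ⬝ᵥ y) • (z - p • x) := by rw [mul_smul, eq_sub_of_add_eq' hpq]
    _ = (((star z ⬝ᵥ y) * q) * (star x ⬝ᵥ y)) • x + (star z ⬝ᵥ y) • z := by rw [hp]; module
    _ = (star x ⬝ᵥ y) • x + (star z ⬝ᵥ y) • z := by rw [hq, one_mul]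

end CommRing

section Kraus

variable {n : ℕ} {lam : ℝ} {x y z : Fin n → ℂ}

lemma Kmat_isHermitian (lam : ℝ) (x : Fin n → ℂ) : (Kmat lam x).IsHermitian := by
  simp [IsHermitian, Kmat, conjTranspose_vecMulVec]

lemma Kmat_mulVec_self (lam : ℝ) (hx : star x ⬝ᵥ x = 1) :
    Kmat lam x *ᵥ x = (√(1 - lam) : ℂ) • x := by
  simp [Kmat, sub_mulVec, smul_mulVec, vecMulVec_mulVec, hx, sub_smul]

lemma star_vecMul_Kmat (lam : ℝ) (hx : star x ⬝ᵥ x = 1) :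
    star x ᵥ* Kmat lam x = (√(1 - lam) : ℂ) • star x := by
  simp [Kmat, vecMul_sub, vecMul_smul, vecMul_vecMulVec, hx, sub_smul]

lemma Kmat_mulVec_of_orthogonal (lam : ℝ) (hz : star x ⬝ᵥ z = 0) : Kmat lam x *ᵥ z = z := by
  simp [Kmat, sub_mulVec, smul_mulVec, vecMulVec_mulVec, hz]

lemma det_Kmat (lam : ℝ) (hx : star x ⬝ᵥ x = 1) : (Kmat lam x).det = (√(1 - lam) : ℂ) := by
  rw [Kmat, sub_eq_add_neg, ← neg_smul, ← smul_vecMulVec, vecMulVec_eq Unit,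
    det_one_add_replicateCol_mul_replicateRow, dotProduct_smul, hx]
  simp

lemma isUnit_det_Kmat (hlam : lam < 1) (hx : star x ⬝ᵥ x = 1) : IsUnit (Kmat lam x).det := by
  simp [det_Kmat lam hx, Real.sqrt_eq_zero', hlam]

lemma inv_Kmat_mulVec_smul_add_smul (hlam : lam < 1) (hx : star x ⬝ᵥ x = 1)
    (hz : star x ⬝ᵥ z = 0) (a b : ℂ) :
    (Kmat lam x)⁻¹ *ᵥ (a • x + b • z) = (a / √(1 - lam)) • x + b • z := by
  have hs : (√(1 - lam) : ℂ) ≠ 0 := by simp [Real.sqrt_eq_zero', hlam]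
  let := (Kmat lam x).invertibleOfIsUnitDet (isUnit_det_Kmat hlam hx)
  apply inv_mulVec_eq_vec
  rw [mulVec_add, mulVec_smul, mulVec_smul, Kmat_mulVec_self lam hx,
    Kmat_mulVec_of_orthogonal lam hz, smul_smul, div_mul_cancel₀ _ hs]

lemma Lmat_eq_vecMulVec (lam : ℝ) (x y : Fin n → ℂ) :
    Lmat lam x y = vecMulVec ((√lam : ℂ) • y) (star x) := by
  rw [Lmat, smul_vecMulVec]

lemma Psi_apply (lam : ℝ) (x y : Fin n → ℂ) (ρ : Matrix (Fin n) (Fin n) ℂ) :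
    Psi lam x y ρ =
      Kmat lam x * ρ * (Kmat lam x)ᴴ + Lmat lam x y * ρ * (Lmat lam x y)ᴴ :=
  rfl

lemma Lhat_eq_smul_vecMulVec (hlam : lam < 1) (hx : star x ⬝ᵥ x = 1) (hxz : star x ⬝ᵥ z = 0)
    (hy : y = (star x ⬝ᵥ y) • x + (star z ⬝ᵥ y) • z) :
    Lhat lam x y z = (√(1 - lam * ‖star z ⬝ᵥ y‖ ^ 2) : ℂ)⁻¹ •
      vecMulVec ((Kmat lam x)⁻¹ *ᵥ ((√lam : ℂ) • y)) (star x) := by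
  have hKy : (Kmat lam x)⁻¹ *ᵥ y =
      ((star x ⬝ᵥ y) / √(1 - lam)) • x + (star z ⬝ᵥ y) • z := by
    conv_lhs => rw [hy, inv_Kmat_mulVec_smul_add_smul hlam hx hxz]
  rw [mulVec_smul, hKy, Lhat, Real.sqrt_mul (sub_pos.2 hlam).le]
  simp only [smul_vecMulVec, add_vecMulVec, smul_add, smul_smul]
  push_cast
  congr 2 <;> ring

lemma norm_sq_add_norm_sq_eq_one (hy : star y ⬝ᵥ y = 1)
    (hexp : y = (star x ⬝ᵥ y) • x + (star z ⬝ᵥ y) • z) :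
    ‖star x ⬝ᵥ y‖ ^ 2 + ‖star z ⬝ᵥ y‖ ^ 2 = 1 := by
  have h := star_dotProduct_self_eq_of_eq_smul_add_smul hexp
  simp only [hy, Complex.star_def, Complex.mul_conj'] at h
  exact_mod_cast h.symm

lemma sqrt_mul_star_add_smul_mul_star (hlam : lam ∈ Set.Icc 0 1) (x y : Fin n → ℂ) :
    (√(1 - lam) : ℂ) * star (√(1 - lam) : ℂ) +
        (star x ⬝ᵥ (√lam : ℂ) • y) * star (star x ⬝ᵥ (√lam : ℂ) • y) =
      ((1 - lam + lam * ‖star x ⬝ᵥ y‖ ^ 2 : ℝ) : ℂ) := by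
  simp only [dotProduct_smul, Complex.star_def, Complex.mul_conj', norm_smul, Complex.norm_real,
    Real.norm_eq_abs]
  norm_cast
  rw [mul_pow, sq_abs, sq_abs, Real.sq_sqrt (sub_nonneg.2 hlam.2), Real.sq_sqrt hlam.1]

lemma leftInverse_Psi (hlam : lam ∈ Set.Ico 0 1) (hx : star x ⬝ᵥ x = 1) (hy : star y ⬝ᵥ y = 1)
    (hxz : star x ⬝ᵥ z = 0) (hexp : y = (star x ⬝ᵥ y) • x + (star z ⬝ᵥ y) • z) :
    Function.LeftInverse
      (fun ρ => (Kmat lam x)⁻¹ * ρ * (Kmat lam x)⁻¹ - Lhat lam x y z * ρ * (Lhat lam x y z)ᴴ)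
      (Psi lam x y) := by
  have hnorm := norm_sq_add_norm_sq_eq_one hy hexp
  set d : ℝ := 1 - lam * ‖star z ⬝ᵥ y‖ ^ 2
  have hd : 1 - lam + lam * ‖star x ⬝ᵥ y‖ ^ 2 = d := by linear_combination lam * hnorm
  have hpos : 0 < d :=
    hd ▸ add_pos_of_pos_of_nonneg (sub_pos.2 hlam.2) (mul_nonneg hlam.1 (sq_nonneg _))
  have hc : (√d : ℂ)⁻¹ * star (√d : ℂ)⁻¹ *
      ((√(1 - lam) : ℂ) * star (√(1 - lam) : ℂ) +
        (star x ⬝ᵥ (√lam : ℂ) • y) * star (star x ⬝ᵥ (√lam : ℂ) • y)) = 1 := by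
    rw [sqrt_mul_star_add_smul_mul_star (Set.Ico_subset_Icc_self hlam), hd, Complex.star_def,
      ← Complex.ofReal_inv, Complex.conj_ofReal]
    norm_cast
    rw [← mul_inv, Real.mul_self_sqrt hpos.le, inv_mul_cancel₀ hpos.ne']
  have hKinv : (Kmat lam x)⁻¹ᴴ = (Kmat lam x)⁻¹ := (Kmat_isHermitian lam x).inv
  intro ρ
  simpa only [hKinv, ← Lmat_eq_vecMulVec, ← Psi_apply,
    Lhat_eq_smul_vecMulVec hlam.2 hx hxz hexp] using
    leftInverse_conj_add_conj_vecMulVec (isUnit_det_Kmat hlam.2 hx) (star_vecMul_Kmat lam hx) hc ρ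

end Kraus

/-- for `λ ∈ [0,1)`, `Ψ_{λ,x,y}` is bijective with inverse
`ρ ↦ K_λ⁻¹ ρ K_λ⁻¹ - L̂_λ ρ L̂_λ†`. -/
theorem Psi_bijective_inverse (n : ℕ) (x y xp : Fin n → ℂ)
    (hind : LinearIndependent ℂ ![x, y])
    (hx : star x ⬝ᵥ x = 1) (hy : star y ⬝ᵥ y = 1)
    (hxp_mem : xp ∈ Submodule.span ℂ {x, y}) (hxp : star xp ⬝ᵥ xp = 1)
    (horth : star x ⬝ᵥ xp = 0)
    (lam : ℝ) (hlam : lam ∈ Set.Ico (0 : ℝ) 1) :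
    Function.Bijective (Psi lam x y) ∧
      Function.LeftInverse
        (fun ρ => (Kmat lam x)⁻¹ * ρ * (Kmat lam x)⁻¹ - Lhat lam x y xp * ρ * (Lhat lam x y xp)ᴴ)
        (Psi lam x y) ∧
      Function.RightInverse
        (fun ρ => (Kmat lam x)⁻¹ * ρ * (Kmat lam x)⁻¹ - Lhat lam x y xp * ρ * (Lhat lam x y xp)ᴴ)
        (Psi lam x y) := by
  have hexp := eq_smul_add_smul_of_mem_span_pair hx hxp horth hxp_mem
  have hleft := leftInverse_Psi hlam hx hy horth hexp
  have hsurj := LinearMap.injective_iff_surjective.1 hleft.injective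
  exact ⟨⟨hleft.injective, hsurj⟩, hleft, hleft.rightInverse_of_surjective hsurj⟩

end
end

section
/- Let x, y ∈ ℂⁿ be orthogonal unit vectors (⟨x,y⟩ = 0). Then for all λ, μ ∈ [0,1] one has Ψ_{λ,x,y} ∘ Ψ_{μ,x,y} = Ψ_{λ+μ−λμ, x, y}; in particular Ψ_{λ,x,y} and Ψ_{μ,x,y} commute. -/
open Matrix Kronecker
open scoped ComplexOrder

noncomputable section

/-!
Put `P = x x†` and `N = y x†`. Since `P` is idempotent, `1 - (1 - t) P` is multiplicative in `t`, so
`K_λ K_μ = K_ν` with `1 - ν = (1 - λ)(1 - μ)`. Orthogonality gives `P N = 0` and `N² = 0`, while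
`N P = N`; hence `K_λ N = N`, `N K_μ = √(1 - μ) N` and `L_λ L_μ = 0`. The two surviving cross terms
of `Ψ_λ ∘ Ψ_μ` therefore add up to `(μ + λ (1 - μ)) N ρ N† = ν N ρ N†`.
-/

section Algebra

variable {R A : Type*} [CommRing R] [Ring A] [Algebra R A]

theorem one_sub_smul_mul_one_sub_smul_of_isIdempotentElem {p : A} (hp : IsIdempotentElem p)
    (s t : R) : (1 - (1 - s) • p) * (1 - (1 - t) • p) = 1 - (1 - s * t) • p := by
  simp only [sub_mul, mul_sub, one_mul, mul_one, smul_mul_assoc, mul_smul_comm, hp.eq]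
  module

theorem one_sub_smul_mul_of_mul_eq_zero {p a : A} (h : p * a = 0) (c : R) :
    (1 - c • p) * a = a := by
  rw [sub_mul, one_mul, smul_mul_assoc, h, smul_zero, sub_zero]

theorem mul_one_sub_smul_of_mul_eq_self {p a : A} (h : a * p = a) (t : R) :
    a * (1 - (1 - t) • p) = t • a := by
  rw [mul_sub, mul_one, mul_smul_comm, h]
  module

end Algebra

section RankOne

variable {l m n R : Type*} [Fintype m]

theorem vecMulVec_mul_vecMulVec_of_dotProduct_eq_zero [NonUnitalSemiring R] {v w : m → R}
    (h : v ⬝ᵥ w = 0) (u : l → R) (z : n → R) : vecMulVec u v * vecMulVec w z = 0 := by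
  rw [vecMulVec_mul_vecMulVec, h, zero_smul]
  exact Matrix.ext fun _ _ => mul_zero _

theorem vecMulVec_mul_vecMulVec_of_dotProduct_eq_one [Semiring R] {v w : m → R}
    (h : v ⬝ᵥ w = 1) (u : l → R) (z : n → R) :
    vecMulVec u v * vecMulVec w z = vecMulVec u z := by
  rw [vecMulVec_mul_vecMulVec, h, one_smul]

end RankOne

section Sandwich

variable {l m n : ℕ}

theorem sandwich_apply (A : Matrix (Fin m) (Fin n) ℂ) (ρ : Matrix (Fin n) (Fin n) ℂ) :
    sandwich A ρ = A * ρ * Aᴴ := rfl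

theorem sandwich_zero : sandwich (0 : Matrix (Fin m) (Fin n) ℂ) = 0 := by
  ext1 ρ
  rw [sandwich_apply, Matrix.zero_mul, Matrix.zero_mul, LinearMap.zero_apply]

theorem sandwich_smul (c : ℂ) (A : Matrix (Fin m) (Fin n) ℂ) :
    sandwich (c • A) = (Complex.normSq c : ℂ) • sandwich A := by
  ext1 ρ
  simp only [sandwich_apply, LinearMap.smul_apply, conjTranspose_smul, Matrix.smul_mul,
    Matrix.mul_smul, smul_smul, Complex.star_def, Complex.normSq_eq_conj_mul_self]

theorem sandwich_sqrt_smul {t : ℝ} (ht : 0 ≤ t) (A : Matrix (Fin m) (Fin n) ℂ) :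
    sandwich ((√t : ℂ) • A) = (t : ℂ) • sandwich A := by
  rw [sandwich_smul, Complex.normSq_ofReal, Real.mul_self_sqrt ht]

theorem sandwich_comp_sandwich (A : Matrix (Fin l) (Fin m) ℂ) (B : Matrix (Fin m) (Fin n) ℂ) :
    sandwich A ∘ₗ sandwich B = sandwich (A * B) := by
  ext1 ρ
  simp only [LinearMap.comp_apply, sandwich_apply, conjTranspose_mul, Matrix.mul_assoc]

end Sandwich

section Psi

variable {n : ℕ} {x y : Fin n → ℂ} {lam mu : ℝ}

theorem Kmat_eq (lam : ℝ) (x : Fin n → ℂ) :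
    Kmat lam x = 1 - (1 - (√(1 - lam) : ℂ)) • vecMulVec x (star x) := by
  rw [Kmat, Complex.ofReal_sub, Complex.ofReal_one]

theorem Kmat_mul_Kmat (hx : star x ⬝ᵥ x = 1) (hlam : lam ≤ 1) (mu : ℝ) :
    Kmat lam x * Kmat mu x = Kmat (lam + mu - lam * mu) x := by
  have sqrt_mul : √(1 - (lam + mu - lam * mu)) = √(1 - lam) * √(1 - mu) := by
    rw [← Real.sqrt_mul (sub_nonneg.2 hlam)]
    ring_nf
  have idem : IsIdempotentElem (vecMulVec x (star x)) :=
    vecMulVec_mul_vecMulVec_of_dotProduct_eq_one hx x (star x)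
  rw [Kmat_eq, Kmat_eq, Kmat_eq, one_sub_smul_mul_one_sub_smul_of_isIdempotentElem idem, sqrt_mul,
    Complex.ofReal_mul]

theorem Kmat_mul_vecMulVec (hxy : star x ⬝ᵥ y = 0) (lam : ℝ) (z : Fin n → ℂ) :
    Kmat lam x * vecMulVec y z = vecMulVec y z :=
  one_sub_smul_mul_of_mul_eq_zero (vecMulVec_mul_vecMulVec_of_dotProduct_eq_zero hxy x z) _

theorem vecMulVec_mul_Kmat (hx : star x ⬝ᵥ x = 1) (z : Fin n → ℂ) (lam : ℝ) :
    vecMulVec z (star x) * Kmat lam x = (√(1 - lam) : ℂ) • vecMulVec z (star x) := by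
  rw [Kmat_eq, mul_one_sub_smul_of_mul_eq_self
    (vecMulVec_mul_vecMulVec_of_dotProduct_eq_one hx z (star x))]

theorem Psi_eq (hlam : 0 ≤ lam) (x y : Fin n → ℂ) :
    Psi lam x y = sandwich (Kmat lam x) + (lam : ℂ) • sandwich (vecMulVec y (star x)) := by
  rw [Psi, Lmat, sandwich_sqrt_smul hlam]

theorem Psi_comp_Psi_general (hx : star x ⬝ᵥ x = 1) (hxy : star x ⬝ᵥ y = 0)
    (hlam : lam ∈ Set.Icc (0 : ℝ) 1) (hmu : mu ∈ Set.Icc (0 : ℝ) 1) :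
    Psi lam x y ∘ₗ Psi mu x y = Psi (lam + mu - lam * mu) x y := by
  set N := vecMulVec y (star x)
  have N_mul_N : N * N = 0 := vecMulVec_mul_vecMulVec_of_dotProduct_eq_zero hxy y (star x)
  have sandwich_N_mul_Kmat :
      sandwich (N * Kmat mu x) = ((1 - mu : ℝ) : ℂ) • sandwich N := by
    rw [vecMulVec_mul_Kmat hx, sandwich_sqrt_smul (sub_nonneg.2 hmu.2)]
  have nu_nonneg : 0 ≤ lam + mu - lam * mu := by
    linarith [hlam.1, mul_nonneg (sub_nonneg.2 hlam.2) hmu.1]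
  calc Psi lam x y ∘ₗ Psi mu x y
      = sandwich (Kmat lam x * Kmat mu x) + (mu : ℂ) • sandwich (Kmat lam x * N)
          + (lam : ℂ) • sandwich (N * Kmat mu x) + (lam * mu : ℂ) • sandwich (N * N) := by
        rw [Psi_eq hlam.1, Psi_eq hmu.1]
        simp only [LinearMap.add_comp, LinearMap.comp_add, LinearMap.smul_comp,
          LinearMap.comp_smul, sandwich_comp_sandwich]
        module
    _ = sandwich (Kmat (lam + mu - lam * mu) x) + (mu : ℂ) • sandwich N
          + (lam : ℂ) • ((1 - mu : ℝ) : ℂ) • sandwich N := by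
        rw [Kmat_mul_Kmat hx hlam.2, Kmat_mul_vecMulVec hxy, sandwich_N_mul_Kmat, N_mul_N,
          sandwich_zero, smul_zero, add_zero]
    _ = Psi (lam + mu - lam * mu) x y := by
        rw [Psi_eq nu_nonneg]
        push_cast
        module

end Psi

/-- for orthogonal unit vectors `x ⊥ y`,
`Ψ_{λ,x,y} ∘ Ψ_{μ,x,y} = Ψ_{λ+μ-λμ,x,y}`; in particular they commute. -/
theorem Psi_comp_Psi (n : ℕ) (x y : Fin n → ℂ)
    (hx : star x ⬝ᵥ x = 1) (hy : star y ⬝ᵥ y = 1) (hxy : star x ⬝ᵥ y = 0)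
    (lam mu : ℝ) (hlam : lam ∈ Set.Icc (0 : ℝ) 1) (hmu : mu ∈ Set.Icc (0 : ℝ) 1) :
    Psi lam x y ∘ₗ Psi mu x y = Psi (lam + mu - lam * mu) x y ∧
      Psi lam x y ∘ₗ Psi mu x y = Psi mu x y ∘ₗ Psi lam x y := by
  refine ⟨Psi_comp_Psi_general hx hxy hlam hmu, ?_⟩
  rw [Psi_comp_Psi_general hx hxy hlam hmu, Psi_comp_Psi_general hx hxy hmu hlam, add_comm lam,
    mul_comm lam]

end
end

section
/- Let x, x⊥ ∈ ℂⁿ be orthogonal unit vectors, λ ∈ [0,1), and set Z := (conj(x))(conj(x⊥))† ⊗ 1_n and f(λ) := (1−λ)^{−1/2} − 1. Then for every linear map Φ on n×n complex matrices, C(Φ ∘ Ψ_{λ,x,x⊥}^{-1}) = C(Φ) + f(λ)(Z Z† C(Φ) + C(Φ) Z Z†) + f(λ)² Z Z† C(Φ) Z Z† − (λ/(1−λ)) Z C(Φ) Z†. -/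
open Matrix Kronecker
open scoped ComplexOrder

noncomputable section

/-!
Precomposing `Φ` with `ρ ↦ A ρ Bᴴ` multiplies `C(Φ)` by `Aᵀ ⊗ 1` on the left and by `(Bᵀ ⊗ 1)ᴴ` on
the right. Since `x x†` is a projection, inverting on its range gives `K_λ⁻¹ = 1 + f(λ) x x†`, whose
transpose tensored with `1` is `1 + f(λ) Z Z†`, while `L_λᵀ ⊗ 1 = √λ Z`. Expanding the two products
gives the formula.
-/

section Choi

variable {n m : ℕ}

theorem Choi_apply (Φ : Matrix (Fin n) (Fin n) ℂ →ₗ[ℂ] Matrix (Fin m) (Fin m) ℂ)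
    (p q : Fin n × Fin m) :
    Choi Φ p q = Φ (single p.1 q.1 1) p.2 q.2 := by
  simp [Choi, Matrix.sum_apply, single_apply, ite_and]

theorem map_apply_eq_sum_Choi (Φ : Matrix (Fin n) (Fin n) ℂ →ₗ[ℂ] Matrix (Fin m) (Fin m) ℂ)
    (X : Matrix (Fin n) (Fin n) ℂ) (a b : Fin m) :
    Φ X a b = ∑ s, ∑ t, X s t * Choi Φ (s, a) (t, b) := by
  have hX : X = ∑ s, ∑ t, X s t • single s t (1 : ℂ) := by
    simpa [smul_single] using matrix_eq_sum_single X
  conv_lhs => rw [hX]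
  simp only [map_sum, map_smul, Matrix.sum_apply, Matrix.smul_apply, smul_eq_mul, Choi_apply]

theorem Choi_sub (Φ Ψ : Matrix (Fin n) (Fin n) ℂ →ₗ[ℂ] Matrix (Fin m) (Fin m) ℂ) :
    Choi (Φ - Ψ) = Choi Φ - Choi Ψ := by
  ext p q
  simp [Choi_apply]

theorem Choi_smul (c : ℂ) (Φ : Matrix (Fin n) (Fin n) ℂ →ₗ[ℂ] Matrix (Fin m) (Fin m) ℂ) :
    Choi (c • Φ) = c • Choi Φ := by
  ext p q
  simp [Choi_apply]

theorem Choi_comp_sandwich₂ {k : ℕ}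
    (Φ : Matrix (Fin n) (Fin n) ℂ →ₗ[ℂ] Matrix (Fin m) (Fin m) ℂ)
    (A B : Matrix (Fin n) (Fin k) ℂ) :
    Choi (Φ ∘ₗ sandwich₂ A B) =
      (Aᵀ ⊗ₖ (1 : Matrix (Fin m) (Fin m) ℂ)) * Choi Φ *
        (Bᵀ ⊗ₖ (1 : Matrix (Fin m) (Fin m) ℂ))ᴴ := by
  ext ⟨j, a⟩ ⟨l, b⟩
  have hentry (s t : Fin n) :
      sandwich₂ A B (single j l 1) s t = A s j * star (B t l) := by
    simp [sandwich₂, Matrix.mul_apply, single_apply, ite_and]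
  calc Choi (Φ ∘ₗ sandwich₂ A B) (j, a) (l, b)
      = ∑ s, ∑ t, A s j * star (B t l) * Choi Φ (s, a) (t, b) := by
        simp only [Choi_apply (Φ ∘ₗ _), LinearMap.comp_apply, map_apply_eq_sum_Choi Φ, hentry]
    _ = ∑ t, ∑ s, A s j * Choi Φ (s, a) (t, b) * star (B t l) := by
        rw [Finset.sum_comm]
        simp only [mul_right_comm]
    _ = _ := by
        simp [Matrix.mul_apply, Fintype.sum_prod_type, one_apply, Finset.sum_mul, apply_ite]

end Choi

theorem isIdempotentElem_vecMulVec {ι R : Type*} [Fintype ι] [Semiring R] {v w : ι → R}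
    (h : w ⬝ᵥ v = 1) : IsIdempotentElem (vecMulVec v w) := by
  rw [IsIdempotentElem, vecMulVec_mul_vecMulVec, h, one_smul]

theorem one_sub_smul_mul_one_add_inv_sub_one_smul {K A : Type*} [Field K] [Ring A] [Algebra K A]
    {p : A} (hp : IsIdempotentElem p) {s : K} (hs : s ≠ 0) :
    (1 - (1 - s) • p) * (1 + (s⁻¹ - 1) • p) = 1 := by
  have hcoeff : s⁻¹ - 1 - (1 - s) - (1 - s) * (s⁻¹ - 1) = 0 := by
    field_simp
    ring
  calc (1 - (1 - s) • p) * (1 + (s⁻¹ - 1) • p)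
      = 1 + (s⁻¹ - 1 - (1 - s) - (1 - s) * (s⁻¹ - 1)) • p := by
        simp only [sub_mul, mul_add, one_mul, mul_one, smul_mul_smul_comm, hp.eq]
        module
    _ = 1 := by rw [hcoeff, zero_smul, add_zero]

theorem one_add_smul_mul_mul_star_one_add_smul {R A : Type*} [CommSemiring R] [StarRing R]
    [Semiring A] [StarRing A] [Algebra R A] [StarModule R A] {c : R} {p : A}
    (hc : IsSelfAdjoint c) (hp : IsSelfAdjoint p) (a : A) :
    (1 + c • p) * a * star (1 + c • p) = a + c • (p * a + a * p) + c ^ 2 • (p * a * p) := by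
  simp only [star_add, star_one, star_smul, hc.star_eq, hp.star_eq, add_mul, mul_add, one_mul,
    mul_one, smul_mul_assoc, mul_smul_comm]
  module

theorem Kmat_inv {n : ℕ} {lam : ℝ} {x : Fin n → ℂ} (hx : star x ⬝ᵥ x = 1) (hlam : lam < 1) :
    (Kmat lam x)⁻¹ = 1 + (((Real.sqrt (1 - lam))⁻¹ - 1 : ℝ) : ℂ) • vecMulVec x (star x) := by
  have hs : (Real.sqrt (1 - lam) : ℂ) ≠ 0 := by
    exact_mod_cast (Real.sqrt_pos.2 (sub_pos.2 hlam)).ne'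
  apply Matrix.inv_eq_right_inv
  simpa [Kmat] using
    one_sub_smul_mul_one_add_inv_sub_one_smul (isIdempotentElem_vecMulVec hx) hs

/-- The operator `Z = conj(x) conj(y)† ⊗ 1_m`, acting on the Choi matrix of a map from `n × n` to
`m × m` matrices; `Zmat` is the case `m = n`. -/
def ZmatOfDim {n : ℕ} (m : ℕ) (x y : Fin n → ℂ) : Matrix (Fin n × Fin m) (Fin n × Fin m) ℂ :=
  vecMulVec (star x) y ⊗ₖ (1 : Matrix (Fin m) (Fin m) ℂ)

section ZmatOfDim

variable {n m : ℕ}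

theorem conjTranspose_ZmatOfDim (x y : Fin n → ℂ) : (ZmatOfDim m x y)ᴴ = ZmatOfDim m y x := by
  simp [ZmatOfDim, conjTranspose_kronecker, conjTranspose_vecMulVec]

theorem ZmatOfDim_mul_conjTranspose (x : Fin n → ℂ) {y : Fin n → ℂ} (hy : star y ⬝ᵥ y = 1) :
    ZmatOfDim m x y * (ZmatOfDim m x y)ᴴ = ZmatOfDim m x x := by
  rw [conjTranspose_ZmatOfDim, ZmatOfDim, ZmatOfDim, ← mul_kronecker_mul,
    vecMulVec_mul_vecMulVec, dotProduct_comm, hy, one_smul, one_mul, ZmatOfDim]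

theorem Choi_comp_sandwich_Kmat_inv {lam : ℝ} {x : Fin n → ℂ} (hx : star x ⬝ᵥ x = 1)
    (hlam : lam < 1) (Φ : Matrix (Fin n) (Fin n) ℂ →ₗ[ℂ] Matrix (Fin m) (Fin m) ℂ) :
    Choi (Φ ∘ₗ sandwich (Kmat lam x)⁻¹) =
      Choi Φ
      + (((Real.sqrt (1 - lam))⁻¹ - 1 : ℝ) : ℂ) •
          (ZmatOfDim m x x * Choi Φ + Choi Φ * ZmatOfDim m x x)
      + ((((Real.sqrt (1 - lam))⁻¹ - 1) ^ 2 : ℝ) : ℂ) •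
          (ZmatOfDim m x x * Choi Φ * ZmatOfDim m x x) := by
  have hK : (Kmat lam x)⁻¹ᵀ ⊗ₖ (1 : Matrix (Fin m) (Fin m) ℂ) =
      1 + (((Real.sqrt (1 - lam))⁻¹ - 1 : ℝ) : ℂ) • ZmatOfDim m x x := by
    rw [Kmat_inv hx hlam, transpose_add, transpose_smul, transpose_vecMulVec, transpose_one,
      add_kronecker, smul_kronecker, one_kronecker_one, ZmatOfDim]
  rw [sandwich, Choi_comp_sandwich₂, hK,
    ← star_eq_conjTranspose, one_add_smul_mul_mul_star_one_add_smul (Complex.conj_ofReal _)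
      (conjTranspose_ZmatOfDim x x), Complex.ofReal_pow]

theorem Choi_comp_sandwich_Lmat {lam : ℝ} (hlam : 0 ≤ lam) (x y : Fin n → ℂ)
    (Φ : Matrix (Fin n) (Fin n) ℂ →ₗ[ℂ] Matrix (Fin m) (Fin m) ℂ) :
    Choi (Φ ∘ₗ sandwich (Lmat lam x y)) =
      (lam : ℂ) • (ZmatOfDim m x y * Choi Φ * (ZmatOfDim m x y)ᴴ) := by
  have hL : (Lmat lam x y)ᵀ ⊗ₖ (1 : Matrix (Fin m) (Fin m) ℂ) =
      (Real.sqrt lam : ℂ) • ZmatOfDim m x y := by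
    rw [Lmat, transpose_smul, transpose_vecMulVec, smul_kronecker, ZmatOfDim]
  have hsqrt : (Real.sqrt lam : ℂ) * Real.sqrt lam = lam := by
    exact_mod_cast Real.mul_self_sqrt hlam
  rw [sandwich, Choi_comp_sandwich₂, hL, conjTranspose_smul, Complex.star_def,
    Complex.conj_ofReal, smul_mul_assoc, smul_mul_smul_comm, hsqrt]

theorem choi_comp_PsiInv_expansion_general {x y : Fin n → ℂ}
    (hx : star x ⬝ᵥ x = 1) (hy : star y ⬝ᵥ y = 1) {lam : ℝ} (hlam : lam ∈ Set.Ico (0 : ℝ) 1)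
    (Φ : Matrix (Fin n) (Fin n) ℂ →ₗ[ℂ] Matrix (Fin m) (Fin m) ℂ) :
    Choi (Φ ∘ₗ PsiInv lam x y) =
      Choi Φ
      + (((Real.sqrt (1 - lam))⁻¹ - 1 : ℝ) : ℂ) •
          (ZmatOfDim m x y * (ZmatOfDim m x y)ᴴ * Choi Φ
            + Choi Φ * (ZmatOfDim m x y * (ZmatOfDim m x y)ᴴ))
      + ((((Real.sqrt (1 - lam))⁻¹ - 1) ^ 2 : ℝ) : ℂ) •
          (ZmatOfDim m x y * (ZmatOfDim m x y)ᴴ * Choi Φ *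
            (ZmatOfDim m x y * (ZmatOfDim m x y)ᴴ))
      - ((lam / (1 - lam) : ℝ) : ℂ) •
          (ZmatOfDim m x y * Choi Φ * (ZmatOfDim m x y)ᴴ) := by
  have hcoeff : (((1 - lam)⁻¹ : ℝ) : ℂ) * lam = ((lam / (1 - lam) : ℝ) : ℂ) := by
    rw [← Complex.ofReal_mul, inv_mul_eq_div]
  rw [PsiInv, LinearMap.comp_sub, LinearMap.comp_smul, Choi_sub, Choi_smul,
    Choi_comp_sandwich_Kmat_inv hx hlam.2, Choi_comp_sandwich_Lmat hlam.1, smul_smul, hcoeff,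
    ZmatOfDim_mul_conjTranspose x hy]

end ZmatOfDim

/-- expansion of `C(Φ ∘ Ψ_λ⁻¹)` in terms of `Z = conj(x) conj(x⊥)† ⊗ 1` and
`f(λ) = (1-λ)^{-1/2} - 1`. -/
theorem choi_comp_PsiInv_expansion (n : ℕ) (x xp : Fin n → ℂ)
    (hx : star x ⬝ᵥ x = 1) (hxp : star xp ⬝ᵥ xp = 1) (horth : star x ⬝ᵥ xp = 0)
    (lam : ℝ) (hlam : lam ∈ Set.Ico (0 : ℝ) 1)
    (Φ : Matrix (Fin n) (Fin n) ℂ →ₗ[ℂ] Matrix (Fin n) (Fin n) ℂ) :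
    Choi (Φ ∘ₗ PsiInv lam x xp) =
      Choi Φ
      + (((Real.sqrt (1 - lam))⁻¹ - 1 : ℝ) : ℂ) •
          (Zmat x xp * (Zmat x xp)ᴴ * Choi Φ + Choi Φ * (Zmat x xp * (Zmat x xp)ᴴ))
      + ((((Real.sqrt (1 - lam))⁻¹ - 1) ^ 2 : ℝ) : ℂ) •
          (Zmat x xp * (Zmat x xp)ᴴ * Choi Φ * (Zmat x xp * (Zmat x xp)ᴴ))
      - ((lam / (1 - lam) : ℝ) : ℂ) • (Zmat x xp * Choi Φ * (Zmat x xp)ᴴ) :=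
  choi_comp_PsiInv_expansion_general hx hxp hlam Φ

end
end

section
/- Let Φ be a quantum channel on n×n complex matrices with Kraus operators {K_j}, let x, x⊥ ∈ ℂⁿ be orthogonal unit vectors, and set Z := (conj(x))(conj(x⊥))† ⊗ 1_n. Then the following are equivalent: (i) u† Z C(Φ) Z† v = 0 for all vectors u, v in the kernel of the Choi matrix C(Φ); (ii) Φ(x⊥ x⊥†) Y x = 0 for every n×n matrix Y in the Hilbert–Schmidt orthogonal complement K_Φ^⊥ of span{K_j}. -/
open Matrix Kronecker
open scoped ComplexOrder

noncomputable section

/-!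
Writing `Φ(ρ) = ∑ⱼ Kⱼ ρ Kⱼ†`, both `C(Φ) = ∑ⱼ vec(Kⱼ) vec(Kⱼ)†` and `Φ(y y†) = ∑ⱼ (Kⱼ y) (Kⱼ y)†`
are sums of rank-one matrices `v v†`, and a vector lies in the kernel of such a sum exactly when it
is orthogonal to every `v`. For `C(Φ)` this gives `ker C(Φ) = vec(K_Φ^⊥)`. Since `C(Φ)` is positive
semidefinite, the form `Z C(Φ) Z†` vanishes on `ker C(Φ)` exactly when `Z†` maps `ker C(Φ)` into
itself. Finally `Z† vec(Y) = vec((Y x) y†)` for `Z = conj(x) conj(y)† ⊗ 1`, and `(Y x) y†` is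
orthogonal to every `Kⱼ` exactly when `Y x` is orthogonal to every `Kⱼ y`, that is, when
`Φ(y y†) Y x = 0`.
-/

section RankOneSums

variable {ι m n R : Type*} [Fintype ι]

theorem sum_vecMulVec_star_eq_mul_conjTranspose [NonUnitalSemiring R] [StarRing R]
    (v : ι → m → R) :
    ∑ j, vecMulVec (v j) (star (v j)) = (of v)ᵀ * (of v)ᵀᴴ := by
  ext a b
  simp only [Matrix.sum_apply, Matrix.mul_apply, vecMulVec_apply, transpose_apply,
    conjTranspose_apply, of_apply, Pi.star_apply]

theorem sum_vecMulVec_star_mulVec_eq_zero_iff [Fintype m] [NonUnitalRing R] [PartialOrder R]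
    [StarRing R] [StarOrderedRing R] [NoZeroDivisors R] (v : ι → m → R) (w : m → R) :
    (∑ j, vecMulVec (v j) (star (v j))) *ᵥ w = 0 ↔ ∀ j, star (v j) ⬝ᵥ w = 0 := by
  rw [sum_vecMulVec_star_eq_mul_conjTranspose, self_mul_conjTranspose_mulVec_eq_zero]
  exact funext_iff

theorem mul_vecMulVec_star_mul_conjTranspose [Fintype n] [NonUnitalSemiring R] [StarRing R]
    (K : Matrix m n R) (a b : n → R) :
    K * vecMulVec a (star b) * Kᴴ = vecMulVec (K *ᵥ a) (star (K *ᵥ b)) := by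
  rw [mul_vecMulVec, vecMulVec_mul, star_mulVec]

theorem sum_mul_vecMulVec_star_mul_conjTranspose_mulVec_eq_zero_iff [Fintype m] [Fintype n]
    [NonUnitalRing R] [PartialOrder R] [StarRing R] [StarOrderedRing R] [NoZeroDivisors R]
    (K : ι → Matrix m n R) (y : n → R) (w : m → R) :
    (∑ j, K j * vecMulVec y (star y) * (K j)ᴴ) *ᵥ w = 0 ↔ ∀ j, star (K j *ᵥ y) ⬝ᵥ w = 0 := by
  simp only [mul_vecMulVec_star_mul_conjTranspose, sum_vecMulVec_star_mulVec_eq_zero_iff]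

end RankOneSums

theorem trace_conjTranspose_mul_vecMulVec_star {m n R : Type*} [Fintype m] [Fintype n]
    [NonUnitalCommSemiring R] [StarRing R] (K : Matrix m n R) (w : m → R) (y : n → R) :
    (Kᴴ * vecMulVec w (star y)).trace = star (K *ᵥ y) ⬝ᵥ w := by
  rw [mul_vecMulVec, trace_vecMulVec, dotProduct_comm, dotProduct_mulVec, star_mulVec]

theorem conjTranspose_vecMulVec_kronecker_one_mulVec_vec {m n p R : Type*}
    [Fintype m] [Fintype n] [DecidableEq m] [CommSemiring R] [StarRing R]
    (x : n → R) (y : p → R) (Y : Matrix m n R) :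
    (vecMulVec (star x) y ⊗ₖ (1 : Matrix m m R))ᴴ *ᵥ Matrix.vec Y =
      Matrix.vec (vecMulVec (Y *ᵥ x) (star y)) := by
  rw [conjTranspose_kronecker, conjTranspose_vecMulVec, star_star, conjTranspose_one,
    kronecker_mulVec_vec, transpose_vecMulVec, Matrix.one_mul, mul_vecMulVec]

theorem forall_dotProduct_mul_mul_conjTranspose_mulVec_eq_zero_iff {m n 𝕜 : Type*}
    [Fintype m] [Fintype n] [RCLike 𝕜] {A : Matrix n n 𝕜} (hA : A.PosSemidef)
    (B : Matrix m n 𝕜) (S : Set (m → 𝕜)) :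
    (∀ u ∈ S, ∀ v ∈ S, star u ⬝ᵥ ((B * A * Bᴴ) *ᵥ v) = 0) ↔ ∀ v ∈ S, A *ᵥ (Bᴴ *ᵥ v) = 0 := by
  have form_eq (u v : m → 𝕜) :
      star u ⬝ᵥ ((B * A * Bᴴ) *ᵥ v) = star (Bᴴ *ᵥ u) ⬝ᵥ (A *ᵥ (Bᴴ *ᵥ v)) := by
    simp only [star_mulVec, conjTranspose_conjTranspose, dotProduct_mulVec, vecMul_vecMul]
  simp only [form_eq]
  exact ⟨fun h v hv ↦ (hA.dotProduct_mulVec_zero_iff _).1 (h v hv v hv),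
    fun h u _ v hv ↦ by rw [h v hv, dotProduct_zero]⟩

section Choi

variable {ι : Type*} {m n : ℕ} (Φ : Matrix (Fin n) (Fin n) ℂ →ₗ[ℂ] Matrix (Fin m) (Fin m) ℂ)

theorem choi_apply (p q : Fin n × Fin m) : Choi Φ p q = Φ (single p.1 q.1 1) p.2 q.2 := by
  simp only [Choi, Matrix.sum_apply, kroneckerMap_apply, single_apply]
  rw [Finset.sum_eq_single p.1, Finset.sum_eq_single q.1] <;> simp +contextual

variable {Φ} [Fintype ι] {K : ι → Matrix (Fin m) (Fin n) ℂ}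

theorem choi_eq_sum_vecMulVec_vec (hKraus : ∀ ρ, Φ ρ = ∑ j, K j * ρ * (K j)ᴴ) :
    Choi Φ = ∑ j, vecMulVec (Matrix.vec (K j)) (star (Matrix.vec (K j))) := by
  ext p q
  have single_eq : single p.1 q.1 (1 : ℂ) =
      vecMulVec (Pi.single p.1 1) (star (Pi.single q.1 1)) := by
    rw [single_eq_single_vecMulVec_single, Pi.star_single, star_one]
  simp only [choi_apply, hKraus, single_eq, mul_vecMulVec_star_mul_conjTranspose,
    mulVec_single_one, Matrix.sum_apply]
  rfl

theorem posSemidef_choi (hKraus : ∀ ρ, Φ ρ = ∑ j, K j * ρ * (K j)ᴴ) : (Choi Φ).PosSemidef := by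
  rw [choi_eq_sum_vecMulVec_vec hKraus]
  exact posSemidef_sum _ fun j _ ↦ posSemidef_vecMulVec_self_star _

theorem choi_mulVec_vec_eq_zero_iff (hKraus : ∀ ρ, Φ ρ = ∑ j, K j * ρ * (K j)ᴴ)
    (Y : Matrix (Fin m) (Fin n) ℂ) :
    Choi Φ *ᵥ Matrix.vec Y = 0 ↔ ∀ j, ((K j)ᴴ * Y).trace = 0 := by
  simp only [choi_eq_sum_vecMulVec_vec hKraus, sum_vecMulVec_star_mulVec_eq_zero_iff,
    star_vec_dotProduct_vec]

theorem choi_mulVec_vec_vecMulVec_star_eq_zero_iff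
    (hKraus : ∀ ρ, Φ ρ = ∑ j, K j * ρ * (K j)ᴴ) (w : Fin m → ℂ) (y : Fin n → ℂ) :
    Choi Φ *ᵥ Matrix.vec (vecMulVec w (star y)) = 0 ↔ Φ (vecMulVec y (star y)) *ᵥ w = 0 := by
  rw [choi_mulVec_vec_eq_zero_iff hKraus, hKraus,
    sum_mul_vecMulVec_star_mul_conjTranspose_mulVec_eq_zero_iff]
  simp only [trace_conjTranspose_mul_vecMulVec_star]

theorem kernel_condition_equiv_general (hKraus : ∀ ρ, Φ ρ = ∑ j, K j * ρ * (K j)ᴴ)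
    (x y : Fin n → ℂ) :
    (∀ u v : Fin n × Fin m → ℂ, Choi Φ *ᵥ u = 0 → Choi Φ *ᵥ v = 0 →
        star u ⬝ᵥ ((vecMulVec (star x) y ⊗ₖ (1 : Matrix (Fin m) (Fin m) ℂ) * Choi Φ *
          (vecMulVec (star x) y ⊗ₖ (1 : Matrix (Fin m) (Fin m) ℂ))ᴴ) *ᵥ v) = 0) ↔
    (∀ Y : Matrix (Fin m) (Fin n) ℂ, (∀ j, ((K j)ᴴ * Y).trace = 0) →
        (Φ (vecMulVec y (star y)) * Y) *ᵥ x = 0) := by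
  set Z := vecMulVec (star x) y ⊗ₖ (1 : Matrix (Fin m) (Fin m) ℂ)
  calc
    _ ↔ ∀ v, Choi Φ *ᵥ v = 0 → Choi Φ *ᵥ (Zᴴ *ᵥ v) = 0 := by
      refine (forall_congr' fun u ↦ forall_comm).trans ?_
      exact forall_dotProduct_mul_mul_conjTranspose_mulVec_eq_zero_iff (posSemidef_choi hKraus) Z
        {v | Choi Φ *ᵥ v = 0}
    _ ↔ ∀ Y, Choi Φ *ᵥ Matrix.vec Y = 0 → Choi Φ *ᵥ (Zᴴ *ᵥ Matrix.vec Y) = 0 :=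
      vec_bijective.surjective.forall
    _ ↔ _ := by
      simp only [Z, conjTranspose_vecMulVec_kronecker_one_mulVec_vec, ← mulVec_mulVec,
        choi_mulVec_vec_vecMulVec_star_eq_zero_iff hKraus, choi_mulVec_vec_eq_zero_iff hKraus]

end Choi

/-- equivalence of the kernel condition `u† Z C(Φ) Z† v = 0` on `ker C(Φ)`
with `Φ(x⊥ x⊥†) Y x = 0` for all `Y ∈ K_Φ^⊥`. -/
theorem kernel_condition_equiv (n r : ℕ) (K : Fin r → Matrix (Fin n) (Fin n) ℂ)
    (Φ : Matrix (Fin n) (Fin n) ℂ →ₗ[ℂ] Matrix (Fin n) (Fin n) ℂ)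
    (hKraus : ∀ ρ, Φ ρ = ∑ j, K j * ρ * (K j)ᴴ) (hΦ : IsChannel Φ)
    (x xp : Fin n → ℂ)
    (hx : star x ⬝ᵥ x = 1) (hxp : star xp ⬝ᵥ xp = 1) (horth : star x ⬝ᵥ xp = 0) :
    (∀ u v : Fin n × Fin n → ℂ, Choi Φ *ᵥ u = 0 → Choi Φ *ᵥ v = 0 →
        star u ⬝ᵥ ((Zmat x xp * Choi Φ * (Zmat x xp)ᴴ) *ᵥ v) = 0) ↔
    (∀ Y : Matrix (Fin n) (Fin n) ℂ, (∀ j, ((K j)ᴴ * Y).trace = 0) →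
        (Φ (Matrix.vecMulVec xp (star xp)) * Y) *ᵥ x = 0) :=
  kernel_condition_equiv_general hKraus x xp

end
end
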